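/- arXiv:2605.15234 — 3 statements merged into one kernel-verified Lean document; each statement's English description precedes it below -/
import Mathlib

section
/- Let Σ_X ∈ M_N be real symmetric positive definite, Σ_ξ ∈ M_N real symmetric positive semidefinite, and R ∈ M_N invertible. Define the ℂ-linear map T : M_N → M_N by T[Q] := tr(Σ_X Q)·( Σ_X⁻¹ + Σ_X⁻¹ R* Σ_ξ R Σ_X⁻¹ ) + Qᵀ. Then the spectral radius of T (the largest modulus of an eigenvalue of T as a ℂ-linear endomorphism of M_N) equals N + 1 + tr( Σ_ξ R Σ_X⁻¹ R* ). -/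
open Matrix ComplexOrder

noncomputable section

abbrev Mat (N : ℕ) := Matrix (Fin N) (Fin N) ℂ

/-- Spectral radius of a linear endomorphism of matrix space: the largest modulus of an
eigenvalue. -/
def specRad {N : ℕ} (f : Module.End ℂ (Mat N)) : ℝ :=
  sSup {r : ℝ | ∃ μ : ℂ, f.HasEigenvalue μ ∧ r = ‖μ‖}

/-- The map `T[Q] := tr(Σ_X Q)·(Σ_X⁻¹ + Σ_X⁻¹ R* Σ_ξ R Σ_X⁻¹) + Qᵀ`. -/
def Tmap {N : ℕ} (SX Sxi R : Mat N) : Module.End ℂ (Mat N) where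
  toFun Q := Matrix.trace (SX * Q) • (SX⁻¹ + SX⁻¹ * Rᴴ * Sxi * R * SX⁻¹) + Qᵀ
  map_add' Q Q' := by
    simp [Matrix.mul_add, Matrix.trace_add, add_smul, Matrix.transpose_add]
    abel
  map_smul' a Q := by
    simp [Matrix.mul_smul, Matrix.trace_smul, smul_smul, Matrix.transpose_smul, smul_add]

/-!
The map `T` is a rank-one perturbation `v ↦ φ v • a + σ v` of an involution `σ` by a functional `φ`
that is invariant under `σ`. Applying `φ` to the eigenvalue equation `T v = μ v` gives
`(1 + φ a) * φ v = μ * φ v`, so either `μ = 1 + φ a`, or `φ v = 0` and `μ` is an eigenvalue of `σ`,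
that is `μ ^ 2 = 1`. Conversely `(1 + φ a) • a + σ a` is an eigenvector for `1 + φ a`. Here
`1 + φ a = N + 1 + tr (Σ_ξ R Σ_X⁻¹ R*)`, which exceeds `1`, the modulus of all other eigenvalues.
-/

section InvolutionPerturbation

variable {K V : Type*} [AddCommGroup V]

section CommRing

variable [CommRing K] [Module K V] {σ : Module.End K V} {φ : Module.Dual K V} {a : V}

theorem dual_smulRight_add_apply (hφ : ∀ v, φ (σ v) = φ v) (v : V) :
    φ ((φ.smulRight a + σ) v) = (1 + φ a) * φ v := by
  simp only [LinearMap.add_apply, LinearMap.smulRight_apply, map_add, map_smul, smul_eq_mul, hφ]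
  ring

theorem sq_eq_one_or_eq_of_hasEigenvalue_smulRight_add [IsDomain K] [Module.IsTorsionFree K V]
    (hσ : Function.Involutive σ) (hφ : ∀ v, φ (σ v) = φ v) {μ : K}
    (hμ : Module.End.HasEigenvalue (φ.smulRight a + σ) μ) : μ ^ 2 = 1 ∨ μ = 1 + φ a := by
  obtain ⟨v, hv⟩ := hμ.exists_hasEigenvector
  by_cases hφv : φ v = 0
  · have hσv : σ v = μ • v := by simpa [hφv] using hv.apply_eq_smul
    have hsq : μ ^ 2 • v = (1 : K) • v := by
      rw [sq, mul_smul, ← hσv, ← map_smul, ← hσv, hσ, one_smul]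
    exact .inl (smul_left_injective K hv.2 hsq)
  · have hφμ : μ * φ v = (1 + φ a) * φ v := by
      rw [← dual_smulRight_add_apply hφ, hv.apply_eq_smul, map_smul, smul_eq_mul]
    exact .inr (mul_right_cancel₀ hφv hφμ)

theorem hasEigenvalue_smulRight_add (hσ : Function.Involutive σ) (hφ : ∀ v, φ (σ v) = φ v)
    (ha : (1 + φ a) ^ 2 ≠ 1) : Module.End.HasEigenvalue (φ.smulRight a + σ) (1 + φ a) := by
  have hφv : φ ((1 + φ a) • a + σ a) = (1 + φ a) ^ 2 - 1 := by
    rw [map_add, map_smul, smul_eq_mul, hφ]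
    ring
  refine Module.End.hasEigenvalue_of_hasEigenvector (x := (1 + φ a) • a + σ a)
    ⟨Module.End.mem_eigenspace_iff.2 ?_, fun hv => ?_⟩
  · rw [LinearMap.add_apply, LinearMap.smulRight_apply, hφv, map_add, map_smul, hσ]
    module
  · rw [hv, map_zero] at hφv
    exact ha (sub_eq_zero.1 hφv.symm)

end CommRing

theorem isGreatest_norm_eigenvalue_smulRight_add [NormedField K] [Module K V]
    {σ : Module.End K V} {φ : Module.Dual K V} {a : V} (hσ : Function.Involutive σ)
    (hφ : ∀ v, φ (σ v) = φ v) (ha : 1 < ‖1 + φ a‖) :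
    IsGreatest {r : ℝ | ∃ μ : K, Module.End.HasEigenvalue (φ.smulRight a + σ) μ ∧ r = ‖μ‖}
      ‖1 + φ a‖ := by
  have norm_eq_one {μ : K} (hμ : μ ^ 2 = 1) : ‖μ‖ = 1 :=
    (isOfFinOrder_iff_pow_eq_one.2 ⟨2, two_pos, hμ⟩).norm_eq_one
  constructor
  · exact ⟨1 + φ a, hasEigenvalue_smulRight_add hσ hφ fun hsq => ha.ne' (norm_eq_one hsq), rfl⟩
  · rintro _ ⟨μ, hμ, rfl⟩
    obtain hsq | rfl := sq_eq_one_or_eq_of_hasEigenvalue_smulRight_add hσ hφ hμ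
    · exact (norm_eq_one hsq).trans_le ha.le
    · exact le_rfl

end InvolutionPerturbation

section Matrix

variable {n : Type*} [Fintype n]

/-- The rank-one perturbation `Q ↦ tr(S Q)·A + Qᵀ` of the transposition of square matrices, which
extends `Tmap` to arbitrary scalars, index types and coefficient matrices `A`. -/
def transposePerturbation {α : Type*} [CommSemiring α] (S A : Matrix n n α) :
    Module.End α (Matrix n n α) :=
  (traceLinearMap n α α ∘ₗ mulLeftLinearMap n α S).smulRight A +
    (transposeLinearEquiv n n α α).toLinearMap

theorem Tmap_eq_transposePerturbation {N : ℕ} (SX Sxi R : Mat N) :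
    Tmap SX Sxi R = transposePerturbation SX (SX⁻¹ + SX⁻¹ * Rᴴ * Sxi * R * SX⁻¹) :=
  rfl

theorem trace_mul_transpose_of_isSymm {α : Type*} [NonUnitalCommSemiring α] {S : Matrix n n α}
    (hS : S.IsSymm) (Q : Matrix n n α) : trace (S * Qᵀ) = trace (S * Q) := by
  rw [← trace_transpose_mul, transpose_transpose, hS.eq]

theorem trace_mul_inv_add_inv_mul_mul_inv {α : Type*} [CommRing α] [DecidableEq n]
    {S : Matrix n n α} (hS : IsUnit S) (B : Matrix n n α) :
    trace (S * (S⁻¹ + S⁻¹ * B * S⁻¹)) = Fintype.card n + trace (B * S⁻¹) := by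
  have hdet : IsUnit S.det := (isUnit_iff_isUnit_det S).1 hS
  rw [Matrix.mul_add, mul_nonsing_inv S hdet, Matrix.mul_assoc,
    mul_nonsing_inv_cancel_left S _ hdet, trace_add, trace_one]

variable {𝕜 : Type*} [RCLike 𝕜]

theorem isSymm_of_isHermitian_of_forall_im_eq_zero {n : Type*} {A : Matrix n n 𝕜}
    (hA : A.IsHermitian) (him : ∀ i j, RCLike.im (A i j) = 0) : A.IsSymm :=
  IsSymm.ext fun i j => by rw [← hA.apply, RCLike.star_def, RCLike.conj_eq_iff_im.2 (him i j)]

open scoped MatrixOrder in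
theorem trace_mul_nonneg_of_posSemidef {A B : Matrix n n 𝕜} (hA : A.PosSemidef)
    (hB : B.PosSemidef) : 0 ≤ trace (A * B) := by
  classical
  obtain ⟨C, rfl⟩ := CStarAlgebra.nonneg_iff_eq_star_mul_self.1 hB.nonneg
  rw [← Matrix.mul_assoc, trace_mul_comm, ← Matrix.mul_assoc]
  exact (hA.mul_mul_conjTranspose_same C).trace_nonneg

theorem isGreatest_norm_eigenvalue_transposePerturbation {S A : Matrix n n 𝕜} (hS : S.IsSymm)
    (hSA : 0 < trace (S * A)) :
    IsGreatest {r : ℝ | ∃ μ : 𝕜, (transposePerturbation S A).HasEigenvalue μ ∧ r = ‖μ‖}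
      ‖1 + trace (S * A)‖ := by
  have hnorm : (1 : 𝕜) < (‖1 + trace (S * A)‖ : ℝ) := by
    rw [RCLike.norm_of_nonneg' (by positivity)]
    exact lt_add_of_pos_right 1 hSA
  exact isGreatest_norm_eigenvalue_smulRight_add (σ := (transposeLinearEquiv n n 𝕜 𝕜).toLinearMap)
    transpose_transpose (trace_mul_transpose_of_isSymm hS) (by exact_mod_cast hnorm)

theorem stmt13_general {m : Type*} [Fintype m] [DecidableEq n] [Nonempty n] {SX : Matrix n n 𝕜}
    {Sxi : Matrix m m 𝕜} {R : Matrix m n 𝕜} (hSX : SX.PosDef) (hSXsymm : SX.IsSymm)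
    (hSxi : Sxi.PosSemidef) :
    ∃ ρ : ℝ, (ρ : 𝕜) = Fintype.card n + 1 + trace (Sxi * R * SX⁻¹ * Rᴴ) ∧
      IsGreatest {r : ℝ | ∃ μ : 𝕜, (transposePerturbation SX
        (SX⁻¹ + SX⁻¹ * Rᴴ * Sxi * R * SX⁻¹)).HasEigenvalue μ ∧ r = ‖μ‖} ρ := by
  set A := SX⁻¹ + SX⁻¹ * Rᴴ * Sxi * R * SX⁻¹ with hA
  have htrace : trace (SX * A) = Fintype.card n + trace (Sxi * R * SX⁻¹ * Rᴴ) := by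
    rw [trace_mul_comm _ Rᴴ]
    simpa only [hA, Matrix.mul_assoc] using
      trace_mul_inv_add_inv_mul_mul_inv hSX.isUnit (Rᴴ * Sxi * R)
  have hnonneg : 0 ≤ trace (Sxi * R * SX⁻¹ * Rᴴ) := by
    simpa only [Matrix.mul_assoc] using trace_mul_nonneg_of_posSemidef hSxi
      (hSX.inv.posSemidef.mul_mul_conjTranspose_same R)
  have hpos : 0 < trace (SX * A) := by
    rw [htrace]
    exact add_pos_of_pos_of_nonneg (by exact_mod_cast Fintype.card_pos) hnonneg
  refine ⟨‖1 + trace (SX * A)‖, ?_, isGreatest_norm_eigenvalue_transposePerturbation hSXsymm hpos⟩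
  rw [RCLike.norm_of_nonneg' (by positivity), htrace]
  ring

end Matrix

/-- for `Σ_X` real symmetric positive definite, `Σ_ξ` real symmetric
positive semidefinite and `R` invertible, the spectral radius of `T` equals
`N + 1 + tr(Σ_ξ R Σ_X⁻¹ R*)`. -/
theorem stmt13 {N : ℕ} (hN : 0 < N) (SX Sxi R : Mat N)
    (hSX : SX.PosDef) (hSXreal : ∀ i j, (SX i j).im = 0)
    (hSxi : Sxi.PosSemidef) (hSxireal : ∀ i j, (Sxi i j).im = 0)
    (hR : IsUnit R) :
    (specRad (Tmap SX Sxi R) : ℂ)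
      = (N : ℂ) + 1 + Matrix.trace (Sxi * R * SX⁻¹ * Rᴴ) := by
  have : Nonempty (Fin N) := Fin.pos_iff_nonempty.1 hN
  obtain ⟨ρ, hρ, hmax⟩ := stmt13_general (R := R) hSX
    (isSymm_of_isHermitian_of_forall_im_eq_zero hSX.isHermitian hSXreal) hSxi
  rw [specRad, Tmap_eq_transposePerturbation, hmax.csSup_eq]
  exact hρ.trans (by rw [Fintype.card_fin])

end
end

section
/- Let Σ_X ∈ M_N(ℝ) be symmetric positive definite and Σ_ξ ∈ M_N(ℝ) symmetric positive semidefinite, let X and ξ be independent ℝ^N-valued centered Gaussian random vectors with covariances Σ_X and Σ_ξ respectively, and let G ∈ M_N(ℂ) be arbitrary. Define the random matrix c := X·(Xᵀ G − ξᵀ) ∈ M_N(ℂ) and C := 𝔼[c] = Σ_X G. Then for every Hermitian Q ∈ M_N(ℂ), 𝔼[ c* Q c ] − C* Q C = tr(Σ_X Q)·( G* Σ_X G + Σ_ξ ) + G* Σ_X Qᵀ Σ_X G, where Qᵀ is the transpose of Q without conjugation. -/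
open Matrix MeasureTheory ProbabilityTheory

noncomputable section

variable {n : ℕ} {Θ : Type*} [MeasurableSpace Θ]

/-- `X` is a centered Gaussian random vector with covariance `S`: its law is the pushforward
of a standard Gaussian by a matrix square root of `S`. -/
def IsCenteredGaussian (P : Measure Θ) (X : Θ → Fin n → ℝ)
    (S : Matrix (Fin n) (Fin n) ℝ) : Prop :=
  ∃ A : Matrix (Fin n) (Fin n) ℝ, A * Aᵀ = S ∧
    Measure.map X P =
      Measure.map (fun z => A *ᵥ z) (Measure.pi fun _ : Fin n => gaussianReal 0 1)

/-!
Since `X` is real, `c* Q c = (Xᵀ Q X) (G* X - ξ) (Xᵀ G - ξᵀ)`. The terms linear in `ξ` have mean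
zero because `ξ` is centered and independent of `X`, and the term quadratic in `ξ` contributes
`tr(Σ_X Q) Σ_ξ`. What remains is `G* 𝔼[(Xᵀ Q X) X Xᵀ] G`, and Isserlis' theorem for fourth moments
evaluates the expectation as `tr(Σ_X Q) Σ_X + Σ_X Q Σ_X + Σ_X Qᵀ Σ_X`; the middle term cancels
`C* Q C`. Isserlis' theorem itself is the polarization of the one-dimensional identity
`𝔼[Y⁴] = 3 (𝔼[Y²])²`, valid for every centered Gaussian variable `Y`.
-/

section GaussianFourthMoments
open scoped NNReal ContDiff

-- The moment generating function satisfies `M' t = v * (t * M t)`, and in the Leibniz expansion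
-- of the `(k + 1)`-st derivative of the right-hand side at `0` only one term survives.
lemma integral_pow_add_two_gaussianReal (v : ℝ≥0) (k : ℕ) :
    ∫ x, x ^ (k + 2) ∂gaussianReal 0 v = (k + 1) * v * ∫ x, x ^ k ∂gaussianReal 0 v := by
  set M : ℝ → ℝ := fun t ↦ Real.exp (v * t ^ 2 / 2) with hM
  have moment (j : ℕ) : ∫ x, x ^ j ∂gaussianReal 0 v = iteratedDeriv j M 0 := by
    have h := iteratedDeriv_mgf_zero (X := id) (μ := gaussianReal 0 v) (by simp) j
    simpa [mgf_id_gaussianReal, hM] using h.symm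
  have deriv_M : deriv M = fun t ↦ v * (t * M t) := by
    ext t
    have h : HasDerivAt M _ t := (((hasDerivAt_pow 2 t).const_mul (v : ℝ)).div_const 2).exp
    rw [h.deriv]
    simp [hM]
    ring
  have contDiff_M : ContDiff ℝ ∞ M := by fun_prop
  rw [moment, moment, iteratedDeriv_succ', deriv_M, iteratedDeriv_const_mul_field,
    iteratedDeriv_fun_mul (by fun_prop) (contDiff_M.of_le (mod_cast le_top)).contDiffAt,
    Finset.sum_eq_single 1]
  · simp [iteratedDeriv_fun_id_zero]
    ring
  · intro i _ hi
    simp [iteratedDeriv_fun_id_zero, hi]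
  · simp

lemma integral_pow_four_gaussianReal (v : ℝ≥0) :
    ∫ x, x ^ 4 ∂gaussianReal 0 v = 3 * (v : ℝ) ^ 2 := by
  rw [integral_pow_add_two_gaussianReal v 2, integral_pow_add_two_gaussianReal v 0]
  simp
  ring

variable {E : Type*} [NormedAddCommGroup E] [NormedSpace ℝ E] [CompleteSpace E]
  [SecondCountableTopology E] [MeasurableSpace E] [BorelSpace E]
  (μ : Measure E) [IsGaussian μ]

lemma integral_dual_sub_mean_pow_four (L : StrongDual ℝ E) :
    ∫ x, L (x - μ[id]) ^ 4 ∂μ = 3 * covarianceBilinDual μ L L ^ 2 := by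
  have hL : HasLaw (fun x ↦ L (x - μ[id])) (gaussianReal 0 Var[L; μ].toNNReal) μ := by
    have h : HasLaw L (gaussianReal μ[L] Var[L; μ].toNNReal) μ :=
      ⟨by fun_prop, IsGaussian.map_eq_gaussianReal L⟩
    simpa [IsGaussian.integral_dual, map_sub] using gaussianReal_sub_const h μ[L]
  rw [← integral_map (f := fun y : ℝ ↦ y ^ 4) hL.aemeasurable (by fun_prop), hL.map_eq,
    integral_pow_four_gaussianReal, Real.coe_toNNReal _ (variance_nonneg _ _),
    covarianceBilinDual_self_eq_variance IsGaussian.memLp_two_id]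

lemma integrable_dual_sub_mean_pow_four (L : StrongDual ℝ E) :
    Integrable (fun x ↦ L (x - μ[id]) ^ 4) μ := by
  have h : MemLp (fun x ↦ L (x - μ[id])) 4 μ :=
    ((IsGaussian.memLp_id μ 4 (by simp)).sub (memLp_const _)).continuousLinearMap_comp L
  exact (h.integrable_norm_pow (by simp)).mono' (by fun_prop) (by simp)

lemma integral_dual_sub_mean_mul_mul_mul (L M N K : StrongDual ℝ E) :
    ∫ x, L (x - μ[id]) * M (x - μ[id]) * N (x - μ[id]) * K (x - μ[id]) ∂μ =
      covarianceBilinDual μ L M * covarianceBilinDual μ N K +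
      covarianceBilinDual μ L N * covarianceBilinDual μ M K +
      covarianceBilinDual μ L K * covarianceBilinDual μ M N := by
  set B := covarianceBilinDual μ
  have hint := integrable_dual_sub_mean_pow_four μ
  -- The signed sum of `(L ± M ± N ± K) ^ 4` over all signs is `2 ^ 3 * 4! * (L * M * N * K)`.
  have polarization :
      192 * ∫ x, L (x - μ[id]) * M (x - μ[id]) * N (x - μ[id]) * K (x - μ[id]) ∂μ =
        3 * B (L + M + N + K) (L + M + N + K) ^ 2 - 3 * B (L + M + N - K) (L + M + N - K) ^ 2
        - 3 * B (L + M - N + K) (L + M - N + K) ^ 2 - 3 * B (L - M + N + K) (L - M + N + K) ^ 2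
        + 3 * B (L + M - N - K) (L + M - N - K) ^ 2 + 3 * B (L - M + N - K) (L - M + N - K) ^ 2
        + 3 * B (L - M - N + K) (L - M - N + K) ^ 2
        - 3 * B (L - M - N - K) (L - M - N - K) ^ 2 := by
    simp only [B, ← integral_dual_sub_mean_pow_four]
    rw [← integral_const_mul, ← integral_sub, ← integral_sub, ← integral_sub, ← integral_add,
      ← integral_add, ← integral_add, ← integral_sub]
    · congr with x
      simp only [_root_.add_apply, _root_.sub_apply]
      ring
    all_goals fun_prop
  have symm (F H : StrongDual ℝ E) : B F H = B H F := covarianceBilinDual_comm F H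
  generalize ∫ x, L (x - μ[id]) * M (x - μ[id]) * N (x - μ[id]) * K (x - μ[id]) ∂μ = I
    at polarization ⊢
  simp only [map_add, map_sub, _root_.add_apply, _root_.sub_apply, symm M L, symm N L, symm K L,
    symm N M, symm K M, symm K N] at polarization
  linarith

end GaussianFourthMoments

section Expectations
variable {P : Measure Θ} {ι 𝕜 : Type*} [RCLike 𝕜]

lemma integral_mul_sub_mul_sub_of_indepFun {f g h η ζ : Θ → 𝕜}
    (hind : IndepFun (fun ω ↦ (f ω, g ω, h ω)) (fun ω ↦ (η ω, ζ ω)) P)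
    (hf : Integrable f P) (hfg : Integrable (fun ω ↦ f ω * g ω) P)
    (hfh : Integrable (fun ω ↦ f ω * h ω) P) (hfgh : Integrable (fun ω ↦ f ω * (g ω * h ω)) P)
    (hη : Integrable η P) (hζ : Integrable ζ P) (hηζ : Integrable (fun ω ↦ η ω * ζ ω) P)
    (hη₀ : ∫ ω, η ω ∂P = 0) (hζ₀ : ∫ ω, ζ ω ∂P = 0) :
    ∫ ω, f ω * ((g ω - η ω) * (h ω - ζ ω)) ∂P =
      ∫ ω, f ω * (g ω * h ω) ∂P + (∫ ω, f ω ∂P) * ∫ ω, η ω * ζ ω ∂P := by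
  have ind_fgζ : IndepFun (fun ω ↦ f ω * g ω) ζ P :=
    hind.comp (φ := fun p : 𝕜 × 𝕜 × 𝕜 ↦ p.1 * p.2.1) (ψ := Prod.snd) (by fun_prop) (by fun_prop)
  have ind_fhη : IndepFun (fun ω ↦ f ω * h ω) η P :=
    hind.comp (φ := fun p : 𝕜 × 𝕜 × 𝕜 ↦ p.1 * p.2.2) (ψ := Prod.fst) (by fun_prop) (by fun_prop)
  have ind_fηζ : IndepFun f (fun ω ↦ η ω * ζ ω) P :=
    hind.comp (φ := Prod.fst) (ψ := fun p : 𝕜 × 𝕜 ↦ p.1 * p.2) (by fun_prop) (by fun_prop)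
  have hfgζ : Integrable (fun ω ↦ f ω * g ω * ζ ω) P := ind_fgζ.integrable_mul hfg hζ
  have hfhη : Integrable (fun ω ↦ f ω * h ω * η ω) P := ind_fhη.integrable_mul hfh hη
  have hfηζ : Integrable (fun ω ↦ f ω * (η ω * ζ ω)) P := ind_fηζ.integrable_mul hf hηζ
  calc ∫ ω, f ω * ((g ω - η ω) * (h ω - ζ ω)) ∂P
      = ∫ ω, (f ω * (g ω * h ω) - f ω * g ω * ζ ω - f ω * h ω * η ω
          + f ω * (η ω * ζ ω)) ∂P := by
        congr with ω
        ring
    _ = ∫ ω, f ω * (g ω * h ω) ∂P - ∫ ω, f ω * g ω * ζ ω ∂P - ∫ ω, f ω * h ω * η ω ∂P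
          + ∫ ω, f ω * (η ω * ζ ω) ∂P := by
        rw [integral_add (by fun_prop) hfηζ, integral_sub (by fun_prop) hfhη,
          integral_sub hfgh hfgζ]
    _ = ∫ ω, f ω * (g ω * h ω) ∂P + (∫ ω, f ω ∂P) * ∫ ω, η ω * ζ ω ∂P := by
        rw [ind_fgζ.integral_fun_mul_eq_mul_integral hfg.1 hζ.1,
          ind_fhη.integral_fun_mul_eq_mul_integral hfh.1 hη.1,
          ind_fηζ.integral_fun_mul_eq_mul_integral hf.1 hηζ.1, hη₀, hζ₀]
        ring

lemma memLp_two_mul_of_memLp_four {f g : Θ → 𝕜} (hf : MemLp f 4 P) (hg : MemLp g 4 P) :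
    MemLp (fun ω ↦ f ω * g ω) 2 P := by
  have : ENNReal.HolderTriple 4 4 2 := ⟨by
    rw [show (4 : ENNReal) = 2 * 2 by norm_num, ENNReal.mul_inv (by simp) (by simp), ← mul_add,
      ENNReal.inv_two_add_inv_two, mul_one]⟩
  exact hg.mul' hf

variable [Fintype ι] {x : Θ → ι → 𝕜}

lemma memLp_dotProduct {p : ENNReal} (hx : ∀ k, MemLp (fun ω ↦ x ω k) p P) (u : ι → 𝕜) :
    MemLp (fun ω ↦ u ⬝ᵥ x ω) p P :=
  memLp_finsetSum _ fun k _ ↦ (hx k).const_mul (u k)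

lemma memLp_two_dotProduct_mulVec_self (hx : ∀ k, MemLp (fun ω ↦ x ω k) 4 P)
    (Q : Matrix ι ι 𝕜) : MemLp (fun ω ↦ x ω ⬝ᵥ Q *ᵥ x ω) 2 P :=
  memLp_finsetSum _ fun k _ ↦ memLp_two_mul_of_memLp_four (hx k) (memLp_dotProduct hx (Q k))

lemma integral_mul_dotProduct_mulVec_self {f : Θ → 𝕜}
    (h : ∀ a b, Integrable (fun ω ↦ f ω * (x ω a * x ω b)) P) (Q : Matrix ι ι 𝕜) :
    ∫ ω, f ω * (x ω ⬝ᵥ Q *ᵥ x ω) ∂P = ∑ a, ∑ b, Q a b * ∫ ω, f ω * (x ω a * x ω b) ∂P := by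
  have hint (a b : ι) : Integrable (fun ω ↦ Q a b * (f ω * (x ω a * x ω b))) P :=
    (h a b).const_mul _
  calc ∫ ω, f ω * (x ω ⬝ᵥ Q *ᵥ x ω) ∂P
      = ∫ ω, ∑ a, ∑ b, Q a b * (f ω * (x ω a * x ω b)) ∂P := by
        simp only [dotProduct, Matrix.mulVec, Finset.mul_sum, mul_left_comm (Q _ _)]
    _ = ∑ a, ∑ b, Q a b * ∫ ω, f ω * (x ω a * x ω b) ∂P := by
        simp only [integral_finsetSum _ fun a _ ↦ integrable_finsetSum _ fun b _ ↦ hint a b,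
          integral_finsetSum _ fun b _ ↦ hint _ b, integral_const_mul]

lemma integral_mul_dotProduct_mul_dotProduct {f : Θ → 𝕜}
    (h : ∀ k l, Integrable (fun ω ↦ f ω * (x ω k * x ω l)) P) (u v : ι → 𝕜) :
    ∫ ω, f ω * ((u ⬝ᵥ x ω) * (v ⬝ᵥ x ω)) ∂P =
      u ⬝ᵥ (of fun k l ↦ ∫ ω, f ω * (x ω k * x ω l) ∂P) *ᵥ v := by
  calc ∫ ω, f ω * ((u ⬝ᵥ x ω) * (v ⬝ᵥ x ω)) ∂P
      = ∫ ω, f ω * (x ω ⬝ᵥ vecMulVec u v *ᵥ x ω) ∂P := by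
        simp only [vecMulVec_mulVec, dotProduct_smul, MulOpposite.smul_eq_mul_unop,
          MulOpposite.unop_op, dotProduct_comm u]
    _ = u ⬝ᵥ (of fun k l ↦ ∫ ω, f ω * (x ω k * x ω l) ∂P) *ᵥ v := by
        rw [integral_mul_dotProduct_mulVec_self h]
        simp only [dotProduct, Matrix.mulVec, of_apply, vecMulVec_apply, Finset.mul_sum, mul_assoc,
          mul_comm (v _)]

end Expectations

section MatrixIdentities
variable {R ι κ : Type*} [CommSemiring R] [Fintype ι]

lemma mul_mul_apply_eq_dotProduct_mulVec {κ' : Type*} (A : Matrix κ ι R) (M : Matrix ι ι R)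
    (B : Matrix ι κ' R) (i : κ) (j : κ') : (A * M * B) i j = A i ⬝ᵥ M *ᵥ Bᵀ j := by
  rw [Matrix.mul_assoc]
  rfl

lemma conjTranspose_vecMulVec_mul_mul_vecMulVec [StarRing R] (x : ι → R) (w : κ → R)
    (Q : Matrix ι ι R) :
    (vecMulVec x w)ᴴ * Q * vecMulVec x w = (star x ⬝ᵥ Q *ᵥ x) • vecMulVec (star w) w := by
  rw [conjTranspose_vecMulVec, vecMulVec_mul, vecMulVec_mul_vecMulVec, dotProduct_mulVec,
    vecMulVec_smul]

lemma sum_sum_mul_wick {S : Matrix ι ι R} (hS : S.IsSymm) (Q : Matrix ι ι R) (k l : ι) :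
    ∑ a, ∑ b, Q a b * (S k l * S a b + S k a * S l b + S k b * S l a) =
      (trace (S * Q) • S + S * Q * S + S * Qᵀ * S) k l := by
  have h₁ : ∑ a, ∑ b, Q a b * (S k l * S a b) = trace (S * Q) * S k l := by
    rw [trace_mul_comm]
    simp only [trace, diag_apply, mul_apply, Finset.sum_mul]
    exact Finset.sum_congr rfl fun a _ ↦ Finset.sum_congr rfl fun b _ ↦ by rw [hS.apply b a]; ring
  have h₂ : ∑ a, ∑ b, Q a b * (S k a * S l b) = (S * Q * S) k l := by
    simp only [mul_apply, Finset.sum_mul]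
    rw [Finset.sum_comm]
    exact Finset.sum_congr rfl fun b _ ↦ Finset.sum_congr rfl fun a _ ↦ by rw [hS.apply b l]; ring
  have h₃ : ∑ a, ∑ b, Q a b * (S k b * S l a) = (S * Qᵀ * S) k l := by
    simp only [mul_apply, Finset.sum_mul, transpose_apply]
    exact Finset.sum_congr rfl fun a _ ↦ Finset.sum_congr rfl fun b _ ↦ by rw [hS.apply a l]; ring
  simp only [mul_add, Finset.sum_add_distrib, h₁, h₂, h₃, Matrix.add_apply, Matrix.smul_apply,
    smul_eq_mul]

end MatrixIdentities

/-- The coordinates of the random vector `X` are square integrable and centered, with covariance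
matrix `S`. As the means vanish, the covariances are stated as mixed second moments. -/
structure HasCenteredCovariance {ι : Type*} (P : Measure Θ) (X : Θ → ι → ℝ)
    (S : Matrix ι ι ℝ) : Prop where
  memLp_two (i : ι) : MemLp (fun ω ↦ X ω i) 2 P
  integral_eq_zero (i : ι) : ∫ ω, X ω i ∂P = 0
  integral_mul (i j : ι) : ∫ ω, X ω i * X ω j ∂P = S i j

section CenteredCovariance
variable {ι κ : Type*} {P : Measure Θ} {X : Θ → ι → ℝ} {S : Matrix ι ι ℝ}

lemma hasCenteredCovariance_map_iff (hX : AEMeasurable X P) :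
    HasCenteredCovariance (P.map X) id S ↔ HasCenteredCovariance P X S := by
  have memLp_iff (i : ι) :
      MemLp (fun x : ι → ℝ ↦ x i) 2 (P.map X) ↔ MemLp (fun ω ↦ X ω i) 2 P :=
    memLp_map_measure_iff (measurable_pi_apply i).aestronglyMeasurable hX
  have integral_eq (f : (ι → ℝ) → ℝ) (hf : Measurable f) :
      ∫ x, f x ∂P.map X = ∫ ω, f (X ω) ∂P :=
    integral_map hX hf.aestronglyMeasurable
  have mean_eq (i : ι) : ∫ x, x i ∂P.map X = ∫ ω, X ω i ∂P := integral_eq (· i) (by fun_prop)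
  have moment_eq (i j : ι) : ∫ x, x i * x j ∂P.map X = ∫ ω, X ω i * X ω j ∂P :=
    integral_eq (fun x ↦ x i * x j) (by fun_prop)
  constructor <;> rintro ⟨h₁, h₂, h₃⟩
  · exact ⟨fun i ↦ (memLp_iff i).1 (h₁ i), fun i ↦ (mean_eq i).symm.trans (h₂ i),
      fun i j ↦ (moment_eq i j).symm.trans (h₃ i j)⟩
  · exact ⟨fun i ↦ (memLp_iff i).2 (h₁ i), fun i ↦ (mean_eq i).trans (h₂ i),
      fun i j ↦ (moment_eq i j).trans (h₃ i j)⟩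

namespace HasCenteredCovariance

lemma isSymm (hX : HasCenteredCovariance P X S) : S.IsSymm := by
  ext i j
  simp only [transpose_apply, ← hX.integral_mul, mul_comm]

lemma mulVec [Fintype ι] [IsFiniteMeasure P] (hX : HasCenteredCovariance P X S)
    (A : Matrix κ ι ℝ) : HasCenteredCovariance P (fun ω ↦ A *ᵥ X ω) (A * S * Aᵀ) where
  memLp_two i := memLp_dotProduct hX.memLp_two (A i)
  integral_eq_zero i := by
    simp only [Matrix.mulVec, dotProduct]
    rw [integral_finsetSum _ fun j _ ↦ ((hX.memLp_two j).integrable (by simp)).const_mul _]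
    simp [integral_const_mul, hX.integral_eq_zero]
  integral_mul i j := by
    have hint (k l : ι) : Integrable (fun ω ↦ 1 * (X ω k * X ω l)) P := by
      simp only [one_mul]
      exact (hX.memLp_two k).integrable_mul (hX.memLp_two l)
    have h := integral_mul_dotProduct_mul_dotProduct hint (A i) (A j)
    simp only [one_mul, hX.integral_mul] at h
    rw [mul_mul_apply_eq_dotProduct_mulVec]
    exact h

end HasCenteredCovariance
end CenteredCovariance

section StandardGaussian
variable (ι : Type*) [Fintype ι]

lemma hasCenteredCovariance_pi_gaussianReal [DecidableEq ι] :
    HasCenteredCovariance (Measure.pi fun _ : ι ↦ gaussianReal 0 1) id 1 where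
  memLp_two i := (memLp_id_gaussianReal 2).comp_measurePreserving
    (measurePreserving_eval (fun _ : ι ↦ gaussianReal 0 1) i)
  integral_eq_zero i := by
    simpa using integral_eval (μ := fun _ : ι ↦ gaussianReal 0 1) (i := i)
  integral_mul i j := by
    obtain rfl | hij := eq_or_ne i j
    · calc ∫ z : ι → ℝ, z i * z i ∂Measure.pi (fun _ ↦ gaussianReal 0 1)
          = ∫ x, x ^ 2 ∂gaussianReal 0 1 := by
            simpa only [sq] using integral_comp_eval (μ := fun _ : ι ↦ gaussianReal 0 1) (i := i)
              (f := fun x ↦ x * x) (by fun_prop)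
        _ = (1 : Matrix ι ι ℝ) i i := by simpa using integral_pow_add_two_gaussianReal 1 0
    · have mean_eq_zero : ∫ z : ι → ℝ, z i ∂Measure.pi (fun _ ↦ gaussianReal 0 1) = 0 := by
        simpa using integral_eval (μ := fun _ : ι ↦ gaussianReal 0 1) (i := i)
      have hind : iIndepFun (fun (k : ι) (z : ι → ℝ) ↦ z k) (Measure.pi fun _ ↦ gaussianReal 0 1) :=
        iIndepFun_pi (X := fun _ x ↦ x) fun _ ↦ aemeasurable_id
      simp only [id]
      rw [(hind.indepFun hij).integral_fun_mul_eq_mul_integral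
        (measurable_pi_apply i).aestronglyMeasurable (measurable_pi_apply j).aestronglyMeasurable,
        mean_eq_zero, zero_mul, one_apply_ne hij]

lemma hasGaussianLaw_pi_gaussianReal :
    HasGaussianLaw id (Measure.pi fun _ : ι ↦ gaussianReal 0 1) := by
  have h (i : ι) : HasGaussianLaw (fun z : ι → ℝ ↦ z i) (Measure.pi fun _ ↦ gaussianReal 0 1) :=
    (measurePreserving_eval (fun _ : ι ↦ gaussianReal 0 1) i).hasLaw.hasGaussianLaw
  exact iIndepFun.hasGaussianLaw h (iIndepFun_pi (X := fun _ x ↦ x) fun _ ↦ aemeasurable_id)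

end StandardGaussian

namespace IsCenteredGaussian
variable {P : Measure Θ} {X : Θ → Fin n → ℝ} {S : Matrix (Fin n) (Fin n) ℝ}

lemma hasGaussianLaw (hX : IsCenteredGaussian P X S) : HasGaussianLaw X P := by
  obtain ⟨A, -, hA⟩ := hX
  have h := (hasGaussianLaw_pi_gaussianReal (Fin n)).map_fun A.mulVecLin.toContinuousLinearMap
  exact ⟨hA ▸ h.isGaussian_map⟩

lemma hasCenteredCovariance (hX : IsCenteredGaussian P X S) : HasCenteredCovariance P X S := by
  have hX_meas : AEMeasurable X P := hX.hasGaussianLaw.aemeasurable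
  obtain ⟨A, rfl, hA⟩ := hX
  have hA_meas : Measurable fun z ↦ A *ᵥ z := by fun_prop
  rw [← hasCenteredCovariance_map_iff hX_meas, hA,
    hasCenteredCovariance_map_iff hA_meas.aemeasurable]
  simpa using (hasCenteredCovariance_pi_gaussianReal (Fin n)).mulVec A

end IsCenteredGaussian

section FourthOrderMoments
open Complex (ofReal)

variable {ι κ : Type*} {P : Measure Θ} {X : Θ → ι → ℝ} {ξ : Θ → κ → ℝ} {S : Matrix ι ι ℝ}
  {T : Matrix κ κ ℝ}

namespace HasCenteredCovariance

lemma integral_mul_mul_mul [Finite ι] (hX : HasCenteredCovariance P X S)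
    (hXG : HasGaussianLaw X P) (a b c d : ι) :
    ∫ ω, X ω a * X ω b * X ω c * X ω d ∂P = S a b * S c d + S a c * S b d + S a d * S b c := by
  have := Fintype.ofFinite ι
  have : IsGaussian (P.map X) := hXG.isGaussian_map
  have hμ : HasCenteredCovariance (P.map X) id S :=
    (hasCenteredCovariance_map_iff hXG.aemeasurable).2 hX
  let coord (i : ι) : StrongDual ℝ (ι → ℝ) := ContinuousLinearMap.proj i
  have mean_eq_zero : (P.map X)[id] = 0 := by
    ext i
    rw [eval_integral fun i ↦ (hμ.memLp_two i).integrable (by simp)]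
    exact hμ.integral_eq_zero i
  have cov_eq (i j : ι) : covarianceBilinDual (P.map X) (coord i) (coord j) = S i j := by
    rw [covarianceBilinDual_apply' IsGaussian.memLp_two_id, mean_eq_zero, ← hμ.integral_mul]
    simp [coord]
  have isserlis :=
    integral_dual_sub_mean_mul_mul_mul (P.map X) (coord a) (coord b) (coord c) (coord d)
  simp only [cov_eq, mean_eq_zero, sub_zero] at isserlis
  rw [← isserlis, integral_map hXG.aemeasurable (by fun_prop)]
  rfl

lemma integral_ofReal_eq_zero (hX : HasCenteredCovariance P X S) (i : ι) :
    ∫ ω, (X ω i : ℂ) ∂P = 0 := by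
  rw [integral_complex_ofReal, hX.integral_eq_zero, Complex.ofReal_zero]

lemma integral_ofReal_mul_ofReal (hX : HasCenteredCovariance P X S) (i j : ι) :
    ∫ ω, (X ω i : ℂ) * (X ω j : ℂ) ∂P = S.map ofReal i j := by
  simp only [← Complex.ofReal_mul, integral_complex_ofReal, hX.integral_mul, map_apply]

variable [Fintype ι]

lemma integral_dotProduct_mulVec_self (hX : HasCenteredCovariance P X S) (Q : Matrix ι ι ℂ) :
    ∫ ω, (ofReal ∘ X ω) ⬝ᵥ Q *ᵥ (ofReal ∘ X ω) ∂P = trace (S.map ofReal * Q) := by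
  have hint (a b : ι) : Integrable (fun ω ↦ 1 * ((X ω a : ℂ) * (X ω b : ℂ))) P := by
    simp only [one_mul]
    exact (hX.memLp_two a).ofReal.integrable_mul (hX.memLp_two b).ofReal
  have h := integral_mul_dotProduct_mulVec_self (x := fun ω ↦ ofReal ∘ X ω) hint Q
  simp only [one_mul, Function.comp_apply, hX.integral_ofReal_mul_ofReal] at h
  rw [h, trace_mul_comm]
  simp only [trace, diag_apply, mul_apply, map_apply, hX.isSymm.apply]

lemma integral_dotProduct_mulVec_self_mul_mul (hX : HasCenteredCovariance P X S)
    (hXG : HasGaussianLaw X P) (Q : Matrix ι ι ℂ) (k l : ι) :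
    ∫ ω, ((ofReal ∘ X ω) ⬝ᵥ Q *ᵥ (ofReal ∘ X ω)) * ((X ω k : ℂ) * (X ω l : ℂ)) ∂P =
      (trace (S.map ofReal * Q) • S.map ofReal + S.map ofReal * Q * S.map ofReal
        + S.map ofReal * Qᵀ * S.map ofReal) k l := by
  have memLp_four (i : ι) : MemLp (fun ω ↦ (X ω i : ℂ)) 4 P :=
    ((hXG.eval i).memLp (by simp)).ofReal
  have hint (a b : ι) :
      Integrable (fun ω ↦ (X ω k : ℂ) * (X ω l : ℂ) * ((X ω a : ℂ) * (X ω b : ℂ))) P :=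
    (memLp_two_mul_of_memLp_four (memLp_four k) (memLp_four l)).integrable_mul
      (memLp_two_mul_of_memLp_four (memLp_four a) (memLp_four b))
  have wick (a b : ι) :
      ∫ ω, (X ω k : ℂ) * (X ω l : ℂ) * ((X ω a : ℂ) * (X ω b : ℂ)) ∂P =
        S.map ofReal k l * S.map ofReal a b + S.map ofReal k a * S.map ofReal l b
          + S.map ofReal k b * S.map ofReal l a := by
    have h := congrArg ofReal (hX.integral_mul_mul_mul hXG k l a b)
    rw [← integral_complex_ofReal] at h
    push_cast at h
    simpa only [mul_assoc, map_apply] using h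
  have h := integral_mul_dotProduct_mulVec_self (x := fun ω ↦ ofReal ∘ X ω) hint Q
  simp only [Function.comp_apply, wick, sum_sum_mul_wick (hX.isSymm.map ofReal)] at h
  simpa only [mul_comm (_ ⬝ᵥ _)] using h

end HasCenteredCovariance

variable [Fintype ι]

lemma integral_mul_vecMul_sub [IsFiniteMeasure P] (hX : HasCenteredCovariance P X S)
    (hξ : HasCenteredCovariance P ξ T) (hind : IndepFun X ξ P) (G : Matrix ι κ ℂ) (i : ι) (j : κ) :
    ∫ ω, (X ω i : ℂ) * (vecMul (ofReal ∘ X ω) G j - (ξ ω j : ℂ)) ∂P = (S.map ofReal * G) i j := by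
  have hX_int (k : ι) : Integrable (fun ω ↦ (X ω k : ℂ)) P :=
    (hX.memLp_two k).ofReal.integrable (by simp)
  have hξ_int : Integrable (fun ω ↦ (ξ ω j : ℂ)) P := (hξ.memLp_two j).ofReal.integrable (by simp)
  have hXX_int (k : ι) : Integrable (fun ω ↦ (X ω i : ℂ) * (X ω k : ℂ) * G k j) P :=
    ((hX.memLp_two i).ofReal.integrable_mul (hX.memLp_two k).ofReal).mul_const _
  have hind_ij : IndepFun (fun ω ↦ (X ω i : ℂ)) (fun ω ↦ (ξ ω j : ℂ)) P :=
    hind.comp (φ := fun x : ι → ℝ ↦ (x i : ℂ)) (ψ := fun y : κ → ℝ ↦ (y j : ℂ))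
      (by fun_prop) (by fun_prop)
  have hXξ_int : Integrable (fun ω ↦ (X ω i : ℂ) * (ξ ω j : ℂ)) P :=
    hind_ij.integrable_mul (hX_int i) hξ_int
  calc ∫ ω, (X ω i : ℂ) * (vecMul (ofReal ∘ X ω) G j - (ξ ω j : ℂ)) ∂P
      = ∫ ω, (∑ k, (X ω i : ℂ) * (X ω k : ℂ) * G k j - (X ω i : ℂ) * (ξ ω j : ℂ)) ∂P := by
        simp only [vecMul, dotProduct, mul_sub, Finset.mul_sum, mul_assoc, Function.comp_apply]
    _ = ∑ k, (∫ ω, (X ω i : ℂ) * (X ω k : ℂ) ∂P) * G k j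
          - (∫ ω, (X ω i : ℂ) ∂P) * ∫ ω, (ξ ω j : ℂ) ∂P := by
        rw [integral_sub (integrable_finsetSum _ fun k _ ↦ hXX_int k) hXξ_int,
          integral_finsetSum _ fun k _ ↦ hXX_int k,
          hind_ij.integral_fun_mul_eq_mul_integral (hX_int i).1 hξ_int.1]
        simp only [integral_mul_const]
    _ = (S.map ofReal * G) i j := by
        simp only [hX.integral_ofReal_mul_ofReal, hX.integral_ofReal_eq_zero, zero_mul, sub_zero,
          mul_apply]

lemma integral_mul_dotProduct_sub_mul_dotProduct_sub (hX : HasCenteredCovariance P X S)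
    (hXG : HasGaussianLaw X P) (hξ : HasCenteredCovariance P ξ T) (hind : IndepFun X ξ P)
    (Q : Matrix ι ι ℂ) (u v : ι → ℂ) (i j : κ) :
    ∫ ω, ((ofReal ∘ X ω) ⬝ᵥ Q *ᵥ (ofReal ∘ X ω)) *
        ((u ⬝ᵥ (ofReal ∘ X ω) - (ξ ω i : ℂ)) * (v ⬝ᵥ (ofReal ∘ X ω) - (ξ ω j : ℂ))) ∂P =
      u ⬝ᵥ (trace (S.map ofReal * Q) • S.map ofReal + S.map ofReal * Q * S.map ofReal
          + S.map ofReal * Qᵀ * S.map ofReal) *ᵥ v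
        + trace (S.map ofReal * Q) * T.map ofReal i j := by
  have := hXG.isProbabilityMeasure
  let x : Θ → ι → ℂ := fun ω ↦ ofReal ∘ X ω
  have hx (k : ι) : MemLp (fun ω ↦ x ω k) 4 P := ((hXG.eval k).memLp (by simp)).ofReal
  have hq : MemLp (fun ω ↦ x ω ⬝ᵥ Q *ᵥ x ω) 2 P := memLp_two_dotProduct_mulVec_self hx Q
  have hu (u : ι → ℂ) : MemLp (fun ω ↦ u ⬝ᵥ x ω) 4 P := memLp_dotProduct hx u
  have hu₂ (u : ι → ℂ) : MemLp (fun ω ↦ u ⬝ᵥ x ω) 2 P := (hu u).mono_exponent (by norm_num)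
  have hξ₂ (i : κ) : MemLp (fun ω ↦ (ξ ω i : ℂ)) 2 P := (hξ.memLp_two i).ofReal
  have hind' : IndepFun (fun ω ↦ (x ω ⬝ᵥ Q *ᵥ x ω, u ⬝ᵥ x ω, v ⬝ᵥ x ω))
      (fun ω ↦ ((ξ ω i : ℂ), (ξ ω j : ℂ))) P :=
    hind.comp
      (φ := fun y : ι → ℝ ↦ ((ofReal ∘ y) ⬝ᵥ Q *ᵥ (ofReal ∘ y), u ⬝ᵥ (ofReal ∘ y),
        v ⬝ᵥ (ofReal ∘ y)))
      (ψ := fun y : κ → ℝ ↦ ((y i : ℂ), (y j : ℂ))) (by fun_prop) (by fun_prop)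
  rw [integral_mul_sub_mul_sub_of_indepFun hind' (hq.integrable (by simp))
      (hq.integrable_mul (hu₂ u)) (hq.integrable_mul (hu₂ v))
      (hq.integrable_mul (memLp_two_mul_of_memLp_four (hu u) (hu v)))
      ((hξ₂ i).integrable (by simp)) ((hξ₂ j).integrable (by simp))
      ((hξ₂ i).integrable_mul (hξ₂ j)) (hξ.integral_ofReal_eq_zero i)
      (hξ.integral_ofReal_eq_zero j),
    integral_mul_dotProduct_mul_dotProduct fun k l ↦
      hq.integrable_mul (memLp_two_mul_of_memLp_four (hx k) (hx l)),
    hX.integral_dotProduct_mulVec_self, hξ.integral_ofReal_mul_ofReal]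
  congr 3
  ext k l
  exact hX.integral_dotProduct_mulVec_self_mul_mul hXG Q k l

theorem stmt14_general (hXG : HasGaussianLaw X P) (hX : HasCenteredCovariance P X S)
    (hξ : HasCenteredCovariance P ξ T) (hind : IndepFun X ξ P) (G : Matrix ι κ ℂ)
    {c : Θ → Matrix ι κ ℂ}
    (hc : ∀ ω i j, c ω i j = (X ω i : ℂ) * (vecMul (ofReal ∘ X ω) G j - (ξ ω j : ℂ))) :
    Matrix.of (fun i j ↦ ∫ ω, c ω i j ∂P) = S.map ofReal * G ∧
    ∀ Q : Matrix ι ι ℂ,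
      Matrix.of (fun i j ↦ ∫ ω, ((c ω)ᴴ * Q * c ω) i j ∂P)
          - (S.map ofReal * G)ᴴ * Q * (S.map ofReal * G)
        = trace (S.map ofReal * Q) • (Gᴴ * S.map ofReal * G + T.map ofReal)
          + Gᴴ * S.map ofReal * Qᵀ * S.map ofReal * G := by
  have := hXG.isProbabilityMeasure
  refine ⟨?_, fun Q ↦ ?_⟩
  · ext i j
    simp only [of_apply, hc, integral_mul_vecMul_sub hX hξ hind]
  have star_X (ω : Θ) : star (ofReal ∘ X ω) = ofReal ∘ X ω :=
    funext fun k ↦ Complex.conj_ofReal (X ω k)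
  have conjTranspose_S : (S.map ofReal)ᴴ = S.map ofReal := by
    ext i j
    simp [hX.isSymm.apply]
  have vecMulVec_c (ω : Θ) :
      c ω = vecMulVec (ofReal ∘ X ω) (vecMul (ofReal ∘ X ω) G - ofReal ∘ ξ ω) := by
    ext i j
    exact hc ω i j
  have c_sq (ω : Θ) (i j : κ) : ((c ω)ᴴ * Q * c ω) i j =
      ((ofReal ∘ X ω) ⬝ᵥ Q *ᵥ (ofReal ∘ X ω)) * ((Gᴴ i ⬝ᵥ (ofReal ∘ X ω) - (ξ ω i : ℂ)) *
        (Gᵀ j ⬝ᵥ (ofReal ∘ X ω) - (ξ ω j : ℂ))) := by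
    rw [vecMulVec_c, conjTranspose_vecMulVec_mul_mul_vecMulVec, star_X]
    simp [vecMulVec_apply, vecMul, dotProduct, mul_comm]
  rw [sub_eq_iff_eq_add]
  ext i j
  simp only [of_apply, c_sq, integral_mul_dotProduct_sub_mul_dotProduct_sub hX hXG hξ hind,
    ← mul_mul_apply_eq_dotProduct_mulVec, Matrix.add_apply, Matrix.smul_apply]
  simp only [conjTranspose_mul, conjTranspose_S, Matrix.mul_add, Matrix.add_mul, Matrix.mul_smul,
    Matrix.smul_mul, Matrix.mul_assoc, Matrix.add_apply, Matrix.smul_apply, smul_eq_mul]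
  ring

end FourthOrderMoments

/-- for independent centered Gaussians `X ~ N(0,Σ_X)`, `ξ ~ N(0,Σ_ξ)` and any
`G`, with `c := X (Xᵀ G − ξᵀ)` and `C := 𝔼[c] = Σ_X G`, one has for every Hermitian `Q`:
`𝔼[c* Q c] − C* Q C = tr(Σ_X Q)(G* Σ_X G + Σ_ξ) + G* Σ_X Qᵀ Σ_X G`. -/
theorem stmt14 (P : Measure Θ) [IsProbabilityMeasure P]
    (SX Sxi : Matrix (Fin n) (Fin n) ℝ)
    (hSX : SX.PosDef) (hSxi : Sxi.PosSemidef)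
    (X ξ : Θ → Fin n → ℝ)
    (hX : IsCenteredGaussian P X SX) (hξ : IsCenteredGaussian P ξ Sxi)
    (hindep : IndepFun X ξ P)
    (G : Matrix (Fin n) (Fin n) ℂ) :
    -- the random matrix `c(θ) = X(θ)·(X(θ)ᵀ G − ξ(θ)ᵀ)` and its mean `C`
    (∀ cr : Θ → Matrix (Fin n) (Fin n) ℂ,
      (∀ θ i j, cr θ i j =
        (X θ i : ℂ) * (Matrix.vecMul (fun k => (X θ k : ℂ)) G j - (ξ θ j : ℂ))) →
      Matrix.of (fun i j => ∫ θ, cr θ i j ∂P) = (SX.map (Complex.ofReal ·)) * G ∧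
      ∀ Q : Matrix (Fin n) (Fin n) ℂ, Q.IsHermitian →
        Matrix.of (fun i j => ∫ θ, ((cr θ)ᴴ * Q * cr θ) i j ∂P)
          - ((SX.map (Complex.ofReal ·)) * G)ᴴ * Q * ((SX.map (Complex.ofReal ·)) * G)
        = Matrix.trace ((SX.map (Complex.ofReal ·)) * Q) •
            (Gᴴ * (SX.map (Complex.ofReal ·)) * G + (Sxi.map (Complex.ofReal ·)))
          + Gᴴ * (SX.map (Complex.ofReal ·)) * Qᵀ * (SX.map (Complex.ofReal ·)) * G) := by
  exact fun cr hcr ↦ (stmt14_general hX.hasGaussianLaw hX.hasCenteredCovariance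
    hξ.hasCenteredCovariance hindep G hcr).imp_right fun h Q _ ↦ h Q

end
end

section
/- Let κ : ℤ → ℂ be finitely supported with κ(−ℓ) = conj(κ(ℓ)) for all ℓ, and suppose its Fourier series is nonnegative: Σ_ℓ κ(ℓ)·e^{iℓθ} is a nonnegative real number for every θ ∈ ℝ. Then for any M ≥ 1, any matrices B_1, …, B_M ∈ M_N, and any Hermitian positive semidefinite Q ∈ M_N, the matrix Σ_{m=1}^M Σ_{m'=1}^M κ(m − m')· B_m* Q B_{m'} is Hermitian positive semidefinite. -/
open Matrix ComplexOrder

noncomputable section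

/-!
The numbers `κ ℓ` are the Fourier coefficients of the nonnegative function
`f = ∑ ℓ, κ ℓ e^{iℓθ}`, so the Toeplitz matrix `A = (κ (x i - x j))` is an average of rank-one
matrices with weights `f ≥ 0`, hence positive semidefinite. Stacking the `B i` into one block column
`𝐁` turns the double sum into `𝐁ᴴ (A ⊗ Q) 𝐁`, a congruence of a Kronecker product of positive
semidefinite matrices.
-/

open MeasureTheory AddCircle
open scoped Kronecker

section Matrix

variable {𝕜 ι n p : Type*} [RCLike 𝕜]

theorem posSemidef_integral {α : Type*} [MeasurableSpace α] {μ : Measure α}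
    {A : α → Matrix ι ι 𝕜} (hint : ∀ i j, Integrable (fun t ↦ A t i j) μ)
    (hA : ∀ᵐ t ∂μ, (A t).PosSemidef) :
    (of fun i j ↦ ∫ t, A t i j ∂μ).PosSemidef := by
  refine ⟨?_, fun x ↦ ?_⟩
  · ext i j
    simp only [conjTranspose_apply, of_apply, RCLike.star_def, ← integral_conj]
    refine integral_congr_ae ?_
    filter_upwards [hA] with t ht using ht.isHermitian.apply i j
  · have form_eq : (x.sum fun i xi ↦ x.sum fun j xj ↦ star xi * (∫ t, A t i j ∂μ) * xj) =
        ∫ t, x.sum fun i xi ↦ x.sum fun j xj ↦ star xi * A t i j * xj ∂μ := by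
      have term_int : ∀ i j, Integrable (fun t ↦ star (x i) * A t i j * x j) μ :=
        fun i j ↦ ((hint i j).const_mul _).mul_const _
      simp only [Finsupp.sum]
      rw [integral_finsetSum _ fun i _ ↦ integrable_finsetSum _ fun j _ ↦ term_int i j]
      simp only [integral_finsetSum _ fun j _ ↦ term_int _ j, integral_mul_const,
        integral_const_mul]
    simp only [of_apply, form_eq]
    exact integral_nonneg_of_ae (hA.mono fun t ht ↦ ht.2 x)

theorem conjTranspose_mul_kronecker_mul_eq_sum {R : Type*} [CommSemiring R] [Star R]
    [Fintype ι] [Fintype n] (A : Matrix ι ι R) (Q : Matrix n n R) (B : ι → Matrix n p R) :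
    (of fun (k : ι × n) b ↦ B k.1 k.2 b)ᴴ * (A ⊗ₖ Q) * (of fun (k : ι × n) b ↦ B k.1 k.2 b) =
      ∑ i, ∑ j, A i j • ((B i)ᴴ * Q * B j) := by
  ext a b
  simp only [Matrix.sum_apply, Matrix.smul_apply, Matrix.mul_apply, conjTranspose_apply,
    kronecker_apply, Fintype.sum_prod_type, Finset.mul_sum, Finset.sum_mul, smul_eq_mul, of_apply]
  rw [Finset.sum_comm (s := (Finset.univ : Finset ι)) (t := (Finset.univ : Finset ι))]
  refine Finset.sum_congr rfl fun j _ ↦ ?_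
  rw [Finset.sum_comm]
  refine Finset.sum_congr rfl fun i _ ↦ Finset.sum_congr rfl fun d _ ↦
    Finset.sum_congr rfl fun c _ ↦ ?_
  ring

theorem posSemidef_sum_smul_conjTranspose_mul_mul [Fintype ι] [Fintype n] [Finite p]
    {A : Matrix ι ι 𝕜} (hA : A.PosSemidef) {Q : Matrix n n 𝕜} (hQ : Q.PosSemidef)
    (B : ι → Matrix n p 𝕜) :
    (∑ i, ∑ j, A i j • ((B i)ᴴ * Q * B j)).PosSemidef := by
  rw [← conjTranspose_mul_kronecker_mul_eq_sum]
  exact (hA.kronecker hQ).conjTranspose_mul_mul_same _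

end Matrix

section Fourier

variable {T : ℝ} {E : Type*} [NormedAddCommGroup E] [NormedSpace ℂ E] {a : ℤ → E}

theorem posSemidef_fourier_neg_sub {ι : Type*} [Finite ι] (x : ι → ℤ) (t : AddCircle T) :
    (of fun i j ↦ fourier (-(x i - x j)) t).PosSemidef := by
  convert posSemidef_vecMulVec_star_self fun i ↦ fourier (x i) t using 1
  ext i j
  rw [of_apply, neg_sub, sub_eq_neg_add, fourier_add, fourier_neg, vecMulVec_apply, Pi.star_apply,
    RCLike.star_def]

theorem norm_fourier_smul (n : ℤ) (t : AddCircle T) (v : E) : ‖fourier n t • v‖ = ‖v‖ := by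
  rw [norm_smul, fourier_apply, Circle.norm_coe, one_mul]

theorem continuous_tsum_fourier_smul [CompleteSpace E] (ha : Summable fun ℓ ↦ ‖a ℓ‖) :
    Continuous fun t : AddCircle T ↦ ∑' ℓ, fourier ℓ t • a ℓ :=
  continuous_tsum (fun ℓ ↦ (map_continuous (fourier ℓ)).smul continuous_const) ha
    fun ℓ t ↦ (norm_fourier_smul ℓ t (a ℓ)).le

variable [Fact (0 < T)]

theorem posSemidef_fourierCoeff_sub {ι : Type*} [Finite ι] {f : AddCircle T → ℂ}
    (hf : Integrable f haarAddCircle) (hf_nonneg : 0 ≤ᵐ[haarAddCircle] f) (x : ι → ℤ) :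
    (of fun i j ↦ fourierCoeff f (x i - x j)).PosSemidef := by
  refine posSemidef_integral (A := fun t ↦ of fun i j ↦ fourier (-(x i - x j)) t • f t)
    (fun i j ↦ hf.fourier_smul _) ?_
  filter_upwards [hf_nonneg] with t ht
  have smul_eq : (of fun i j ↦ fourier (-(x i - x j)) t • f t) =
      f t • of fun i j ↦ fourier (-(x i - x j)) t := by
    ext i j
    exact mul_comm (fourier (-(x i - x j)) t) (f t)
  change (of fun i j ↦ fourier (-(x i - x j)) t • f t).PosSemidef
  rw [smul_eq]
  exact (posSemidef_fourier_neg_sub x t).smul ht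

theorem fourierCoeff_fourier_smul [CompleteSpace E] (m n : ℤ) (v : E) :
    fourierCoeff (fun t : AddCircle T ↦ fourier m t • v) n = Pi.single (M := fun _ ↦ E) m v n := by
  have coeff_eq : fourierCoeff (fun t : AddCircle T ↦ fourier m t • v) n =
      fourierCoeff (T := T) (fourier m) n • v := by
    simp only [fourierCoeff, smul_smul, smul_eq_mul, integral_smul_const]
  rw [coeff_eq, fourierCoeff_fourier]
  obtain rfl | hmn := eq_or_ne n m
  · simp
  · simp [hmn]

theorem fourierCoeff_tsum_fourier_smul [CompleteSpace E] (ha : Summable fun ℓ ↦ ‖a ℓ‖) (n : ℤ) :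
    fourierCoeff (fun t : AddCircle T ↦ ∑' ℓ, fourier ℓ t • a ℓ) n = a n := by
  have term_int : ∀ ℓ, Integrable (fun t : AddCircle T ↦ fourier (-n) t • fourier ℓ t • a ℓ)
      haarAddCircle := fun ℓ ↦ ((integrable_const (a ℓ)).fourier_smul ℓ).fourier_smul (-n)
  have norm_sum : Summable fun ℓ ↦
      ∫ t : AddCircle T, ‖fourier (-n) t • fourier ℓ t • a ℓ‖ ∂haarAddCircle := by
    simpa only [norm_fourier_smul, integral_const, probReal_univ, one_smul] using ha
  calc fourierCoeff (fun t : AddCircle T ↦ ∑' ℓ, fourier ℓ t • a ℓ) n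
      = ∫ t : AddCircle T, ∑' ℓ, fourier (-n) t • fourier ℓ t • a ℓ ∂haarAddCircle := by
        simp only [fourierCoeff, tsum_const_smul'']
    _ = ∑' ℓ, fourierCoeff (fun t : AddCircle T ↦ fourier ℓ t • a ℓ) n :=
        (integral_tsum_of_summable_integral_norm term_int norm_sum).symm
    _ = a n := by
        simp only [fourierCoeff_fourier_smul]
        rw [tsum_eq_single n fun ℓ hℓ ↦ Pi.single_eq_of_ne hℓ.symm _, Pi.single_eq_same]

end Fourier

theorem stmt15_general {ι n p : Type*} [Fintype ι] [Fintype n] [Finite p] {κ : ℤ → ℂ}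
    (hκ : Summable κ)
    (hpos : ∀ θ : ℝ, 0 ≤ ∑' ℓ : ℤ, κ ℓ * Complex.exp (Complex.I * (ℓ : ℂ) * (θ : ℂ)))
    (x : ι → ℤ) (B : ι → Matrix n p ℂ) {Q : Matrix n n ℂ} (hQ : Q.PosSemidef) :
    (∑ i, ∑ j, κ (x i - x j) • ((B i)ᴴ * Q * B j)).PosSemidef := by
  let f : UnitAddCircle → ℂ := fun t ↦ ∑' ℓ, fourier ℓ t • κ ℓ
  have hf : Integrable f haarAddCircle :=
    (continuous_tsum_fourier_smul hκ.norm).integrable_of_hasCompactSupport (.of_compactSpace f)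
  have hf_nonneg : ∀ t, 0 ≤ f t := by
    intro t
    induction t using QuotientAddGroup.induction_on with | H s =>
    have term_eq : ∀ ℓ : ℤ, fourier ℓ (s : UnitAddCircle) • κ ℓ =
        κ ℓ * Complex.exp (Complex.I * ℓ * (2 * Real.pi * s : ℝ)) := fun ℓ ↦ by
      rw [fourier_coe_apply, smul_eq_mul, mul_comm]
      push_cast
      ring_nf
    simpa only [f, term_eq] using hpos (2 * Real.pi * s)
  have coeff_f : ∀ ℓ, fourierCoeff f ℓ = κ ℓ := fourierCoeff_tsum_fourier_smul hκ.norm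
  simpa only [of_apply, coeff_f] using posSemidef_sum_smul_conjTranspose_mul_mul
    (posSemidef_fourierCoeff_sub hf (.of_forall hf_nonneg) x) hQ B

/-- if `κ : ℤ → ℂ` is finitely supported, satisfies `κ(−ℓ) = conj(κ(ℓ))` and
has nonnegative Fourier series, then for any matrices `B_1,…,B_M` and any PSD `Q` the
matrix `Σ_{m,m'} κ(m−m') B_m* Q B_{m'}` is positive semidefinite. -/
theorem stmt15 {N : ℕ} (κ : ℤ → ℂ)
    (hsupp : (Function.support κ).Finite)
    (hherm : ∀ ℓ : ℤ, κ (-ℓ) = starRingEnd ℂ (κ ℓ))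
    (hpos : ∀ θ : ℝ, ∃ r : ℝ, 0 ≤ r ∧
      (∑ᶠ ℓ : ℤ, κ ℓ * Complex.exp (Complex.I * (ℓ : ℂ) * (θ : ℂ))) = (r : ℂ))
    (M : ℕ) (hM : 1 ≤ M) (B : Fin M → Matrix (Fin N) (Fin N) ℂ)
    (Q : Matrix (Fin N) (Fin N) ℂ) (hQ : Q.PosSemidef) :
    (∑ m : Fin M, ∑ m' : Fin M,
      κ ((m : ℤ) - (m' : ℤ)) • ((B m)ᴴ * Q * B m')).PosSemidef := by
  refine stmt15_general (summable_of_hasFiniteSupport hsupp) (fun θ ↦ ?_) (fun m : Fin M ↦ m) B hQ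
  rw [tsum_eq_finsum (hsupp.subset (Function.support_mul_subset_left κ _))]
  exact RCLike.nonneg_iff_exists_ofReal.2 ((hpos θ).imp fun _ hr ↦ ⟨hr.1, hr.2.symm⟩)

end
end
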